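/- Boundary quadruple for solenoidal fields (Theorem 'simplequadruple'): suppose b is solenoidal and B is finite with harmonic partition functions ψ_q as in the finite boundary data. Define the Hilbert space H̃± := ℝ^B ⊕ ker ∂^⊥ with inner product ⟨(F₁,w₁),(F₂,w₂)⟩ := Σ_{q∈B} F₁(q)F₂(q) + ⟨w₁,w₂⟩_{H₀}; since b is solenoidal, j(1) ∈ ker ∂^⊥, and one lets H± be the orthogonal complement in H̃± of the span of (𝟏_B, −j(1)) and P± the orthogonal projection of H̃± onto H±. Assume every f ∈ D(∂_B^⊥) admits a key representation f = j g + U^{-1}(∂u) + w with g, u ∈ 𝒞, ∂u ∈ D(∂_B*), w ∈ ker ∂^⊥ and z := ∂_B^⊥ f − U^{-1}(∂g) ∈ ker ∂^⊥, and for such a representation set G₋f := (1/√2)·P±((g(q)+n_B(fb)(q))_{q∈B}, w+z) and G₊f := (1/√2)·P±((g(q)−n_B(fb)(q))_{q∈B}, w−z). Then: (a) G₋f and G₊f do not depend on the chosen key representation of f; (b) for all f₁, f₂ ∈ D(∂_B^⊥): ⟨∂_B^⊥ f₁, f₂⟩_{H₀} + ⟨f₁, ∂_B^⊥ f₂⟩_{H₀}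 = ⟨G₋f₁, G₋f₂⟩ − ⟨G₊f₁, G₊f₂⟩; (c) the map f ↦ (G₋f, G₊f) from D(∂_B^⊥) to H± × H± is surjective. In other words, (H±, H±, G₋, G₊) is a boundary quadruple for the operator j f ↦ −U^{-1}(∂f) on j(𝒞_B). -/

import Mathlib

open RealInnerProductSpace ContinuousMap

set_option synthInstance.maxHeartbeats 1000000
set_option maxHeartbeats 1000000

namespace Stmt11

variable {X : Type*} [MetricSpace X] [CompactSpace X]
variable {H : Type*} [NormedAddCommGroup H] [InnerProductSpace ℝ H] [CompleteSpace H]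
variable {H₀ : Type*} [NormedAddCommGroup H₀] [InnerProductSpace ℝ H₀] [CompleteSpace H₀]
variable {ι : Type*} [Fintype ι]

/-- elements of `𝒞` vanishing on `B`, i.e. membership in `𝒞_B` -/
def Vanish (𝒞 : Subalgebra ℝ C(X, ℝ)) (B : Set X) (f : 𝒞) : Prop :=
  ∀ x ∈ B, (f : C(X, ℝ)) x = 0

/-- `d` is the value of the adjoint `∂_B^*` at `v ∈ H`, i.e. `v ∈ D(∂_B^*)` and `∂_B^* v = d`
(the value is unique by density of `j(𝒞_B)`). -/
def AdjRel (𝒞 : Subalgebra ℝ C(X, ℝ)) (B : Set X) (par : 𝒞 →ₗ[ℝ] H)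
    (j : 𝒞 →ₗ[ℝ] H₀) (v : H) (d : H₀) : Prop :=
  ∀ φ : 𝒞, Vanish 𝒞 B φ → ⟪v, par φ⟫ = ⟪d, j φ⟫

/-- membership in `ker ∂^⊥` -/
def KerDperp (𝒞 : Subalgebra ℝ C(X, ℝ)) (par : 𝒞 →ₗ[ℝ] H) (U : H₀ ≃ₗᵢ[ℝ] H) (w : H₀) : Prop :=
  ∀ φ : 𝒞, ⟪U w, par φ⟫ = 0

/-- a key representation of `f ∈ D(∂_B^⊥)`: `f = j g + U⁻¹(∂u) + w` with `∂u ∈ D(∂_B^*)`,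
`w ∈ ker ∂^⊥`, `d = ∂_B^*(U f)` (so `∂_B^⊥ f = −d`), and
`z := ∂_B^⊥ f − U⁻¹(∂g) = −d − U⁻¹(∂g) ∈ ker ∂^⊥`. -/
def KeyRep (𝒞 : Subalgebra ℝ C(X, ℝ)) (B : Set X) (par : 𝒞 →ₗ[ℝ] H)
    (j : 𝒞 →ₗ[ℝ] H₀) (U : H₀ ≃ₗᵢ[ℝ] H) (f d : H₀) (g u : 𝒞) (w : H₀) : Prop :=
  AdjRel 𝒞 B par j (U f) d ∧
  (∃ e : H₀, AdjRel 𝒞 B par j (par u) e) ∧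
  KerDperp 𝒞 par U w ∧
  f = j g + U.symm (par u) + w ∧
  KerDperp 𝒞 par U (-d - U.symm (par g))

/-- the inner product of the boundary space `H̃± = ℝ^B ⊕ ker ∂^⊥` -/
noncomputable def ipTilde (p₁ p₂ : (ι → ℝ) × H₀) : ℝ :=
  (∑ i, p₁.1 i * p₂.1 i) + ⟪p₁.2, p₂.2⟫

/-- the orthogonal projection of `H̃±` onto the orthogonal complement `H±` of the span of `e` -/
noncomputable def projPerp (e x : (ι → ℝ) × H₀) : (ι → ℝ) × H₀ :=
  x - (ipTilde x e / ipTilde e e) • e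

/-- the normal part `n_B(fb)` at the boundary point indexed by `i`, where `d = ∂_B^*(U f)`:
`n_B(fb)(ψ_i) = ⟨U f, ∂ψ_i⟩ + ⟨∂_B^⊥ f, j ψ_i⟩` -/
noncomputable def nfb (𝒞 : Subalgebra ℝ C(X, ℝ)) (par : 𝒞 →ₗ[ℝ] H) (j : 𝒞 →ₗ[ℝ] H₀)
    (U : H₀ ≃ₗᵢ[ℝ] H) (ψ : ι → 𝒞) (f d : H₀) (i : ι) : ℝ :=
  ⟪U f, par (ψ i)⟫ + ⟪-d, j (ψ i)⟫

/-- `G₋ f := (1/√2)·P±((g(q)+n_B(fb)(q))_q, w+z)` for a key representation `(d, g, u, w)` -/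
noncomputable def Gminus (𝒞 : Subalgebra ℝ C(X, ℝ)) (par : 𝒞 →ₗ[ℝ] H) (j : 𝒞 →ₗ[ℝ] H₀)
    (U : H₀ ≃ₗᵢ[ℝ] H) (q : ι → X) (ψ : ι → 𝒞) (f d : H₀) (g : 𝒞) (w : H₀) :
    (ι → ℝ) × H₀ :=
  (Real.sqrt 2)⁻¹ •
    projPerp (fun _ => (1 : ℝ), -(j 1))
      ((fun i => (g : C(X, ℝ)) (q i) + nfb 𝒞 par j U ψ f d i),
        w + (-d - U.symm (par g)))

/-- `G₊ f := (1/√2)·P±((g(q)−n_B(fb)(q))_q, w−z)` for a key representation `(d, g, u, w)` -/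
noncomputable def Gplus (𝒞 : Subalgebra ℝ C(X, ℝ)) (par : 𝒞 →ₗ[ℝ] H) (j : 𝒞 →ₗ[ℝ] H₀)
    (U : H₀ ≃ₗᵢ[ℝ] H) (q : ι → X) (ψ : ι → 𝒞) (f d : H₀) (g : 𝒞) (w : H₀) :
    (ι → ℝ) × H₀ :=
  (Real.sqrt 2)⁻¹ •
    projPerp (fun _ => (1 : ℝ), -(j 1))
      ((fun i => (g : C(X, ℝ)) (q i) - nfb 𝒞 par j U ψ f d i),
        w - (-d - U.symm (par g)))

/-!
Integration by parts, which for a solenoidal `b` is the Leibniz rule, makes `j g ↦ U⁻¹(∂g)`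
skew-symmetric. Hence a key representation `f = j g + U⁻¹(∂u) + w`, with
`∂_B^⊥ f = U⁻¹(∂g) + z`, has normal part `φ ↦ ⟨∂u, ∂φ⟩ + ⟨z, jφ⟩`; evaluating it on `φ = 1` puts
`(n_B(fb), z)` into `H±`. Expanding `⟨f₁, ∂_B^⊥ f₂⟩` along two key representations leaves the
pairing of `(g₁|_B, w₁)` with `(n_B(f₂b), z₂)` up to terms antisymmetric in the two, and
polarization turns the symmetrized pairing into the difference of the forms of `G₋` and `G₊`.
Since constants are the kernel of `∂`, the pair `(g|_B, w)` is determined up to multiples of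
`(𝟏_B, -j(1))`, which `P±` annihilates. For surjectivity, `g` interpolates the first half of the
boundary data and `u` solves the Neumann problem whose flux and source are the second half.
-/

section BoundarySpace

omit [CompleteSpace H₀]

/-- `ipTilde` as a bilinear form. -/
noncomputable def ipForm : LinearMap.BilinForm ℝ ((ι → ℝ) × H₀) :=
  (dotProductBilin ℝ ℝ).compl₁₂ (LinearMap.fst ℝ (ι → ℝ) H₀) (LinearMap.fst ℝ (ι → ℝ) H₀) +
    (innerₗ H₀).compl₁₂ (LinearMap.snd ℝ (ι → ℝ) H₀) (LinearMap.snd ℝ (ι → ℝ) H₀)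

theorem ipTilde_eq_ipForm (x y : (ι → ℝ) × H₀) : ipTilde x y = ipForm x y := rfl

theorem ipTilde_comm (x y : (ι → ℝ) × H₀) : ipTilde x y = ipTilde y x := by
  simp only [ipTilde, mul_comm, real_inner_comm]

theorem ipTilde_self_eq_zero {x : (ι → ℝ) × H₀} : ipTilde x x = 0 ↔ x = 0 := by
  refine ⟨fun h => ?_, fun h => by simp [h, ipTilde_eq_ipForm]⟩
  have hsum : 0 ≤ ∑ i, x.1 i * x.1 i := Finset.sum_nonneg fun i _ => mul_self_nonneg (x.1 i)
  have hinner : 0 ≤ ⟪x.2, x.2⟫ := real_inner_self_nonneg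
  obtain ⟨h₁, h₂⟩ := (add_eq_zero_iff_of_nonneg hsum hinner).1 h
  exact Prod.ext (dotProduct_self_eq_zero.1 h₁) (inner_self_eq_zero.1 h₂)

theorem projPerp_of_ipTilde_eq_zero {e x : (ι → ℝ) × H₀} (hx : ipTilde x e = 0) :
    projPerp e x = x := by
  simp [projPerp, hx]

theorem projPerp_add_of_ipTilde_eq_zero (a : (ι → ℝ) × H₀) {e c : (ι → ℝ) × H₀}
    (hc : ipTilde c e = 0) : projPerp e (a + c) = projPerp e a + c := by
  have h : ipTilde (a + c) e = ipTilde a e := by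
    simpa only [ipTilde_eq_ipForm, map_add, LinearMap.add_apply, add_eq_left] using hc
  rw [projPerp, h, projPerp, sub_add_eq_add_sub]

theorem projPerp_sub_of_ipTilde_eq_zero (a : (ι → ℝ) × H₀) {e c : (ι → ℝ) × H₀}
    (hc : ipTilde c e = 0) : projPerp e (a - c) = projPerp e a - c := by
  have hc' : ipTilde (-c) e = 0 := by
    simpa only [ipTilde_eq_ipForm, map_neg, LinearMap.neg_apply, neg_eq_zero] using hc
  rw [sub_eq_add_neg, projPerp_add_of_ipTilde_eq_zero a hc', sub_eq_add_neg]

theorem projPerp_add_smul_self (e x : (ι → ℝ) × H₀) (c : ℝ) :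
    projPerp e (x + c • e) = projPerp e x := by
  by_cases he : ipTilde e e = 0
  · rw [ipTilde_self_eq_zero.1 he, smul_zero, add_zero]
  · have h : ipTilde (x + c • e) e / ipTilde e e = ipTilde x e / ipTilde e e + c := by
      simp only [ipTilde_eq_ipForm, map_add, map_smul, LinearMap.add_apply, LinearMap.smul_apply,
        smul_eq_mul] at he ⊢
      field_simp
    rw [projPerp, h, projPerp, add_smul]
    abel

theorem ipTilde_projPerp_left (a : (ι → ℝ) × H₀) {e c : (ι → ℝ) × H₀} (hc : ipTilde c e = 0) :
    ipTilde (projPerp e a) c = ipTilde a c := by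
  rw [ipTilde_comm] at hc
  simp only [ipTilde_eq_ipForm, projPerp, map_sub, map_smul, LinearMap.sub_apply,
    LinearMap.smul_apply] at hc ⊢
  rw [hc, smul_zero, sub_zero]

theorem ipTilde_projPerp_add_sub_ipTilde_projPerp_sub (a₁ a₂ : (ι → ℝ) × H₀)
    {e c₁ c₂ : (ι → ℝ) × H₀} (h₁ : ipTilde c₁ e = 0) (h₂ : ipTilde c₂ e = 0) :
    ipTilde ((√2)⁻¹ • projPerp e (a₁ + c₁)) ((√2)⁻¹ • projPerp e (a₂ + c₂)) -
        ipTilde ((√2)⁻¹ • projPerp e (a₁ - c₁)) ((√2)⁻¹ • projPerp e (a₂ - c₂)) =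
      ipTilde a₁ c₂ + ipTilde c₁ a₂ := by
  rw [projPerp_add_of_ipTilde_eq_zero a₁ h₁, projPerp_add_of_ipTilde_eq_zero a₂ h₂,
    projPerp_sub_of_ipTilde_eq_zero a₁ h₁, projPerp_sub_of_ipTilde_eq_zero a₂ h₂,
    ← ipTilde_projPerp_left a₁ h₂, ipTilde_comm c₁ a₂, ← ipTilde_projPerp_left a₂ h₁,
    ipTilde_comm _ c₁]
  simp only [ipTilde_eq_ipForm, map_add, map_sub, map_smul, LinearMap.add_apply,
    LinearMap.sub_apply, LinearMap.smul_apply, smul_eq_mul]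
  linear_combination 2 * (ipForm c₁ (projPerp e a₂) + ipForm (projPerp e a₁) c₂) *
    TsirelsonInequality.sqrt_two_inv_mul_self

theorem inv_sqrt_two_smul_projPerp_add {e y₁ y₂ : (ι → ℝ) × H₀} (h₁ : ipTilde y₁ e = 0) :
    (√2)⁻¹ • projPerp e ((√2)⁻¹ • (y₁ + y₂) + (√2)⁻¹ • (y₁ - y₂)) = y₁ := by
  have hsum : (√2)⁻¹ • (y₁ + y₂) + (√2)⁻¹ • (y₁ - y₂) = (2 * (√2)⁻¹) • y₁ := by module
  rw [hsum, projPerp_of_ipTilde_eq_zero, smul_smul, mul_left_comm,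
    TsirelsonInequality.sqrt_two_inv_mul_self]
  · norm_num
  · simpa only [ipTilde_eq_ipForm, map_smul, LinearMap.smul_apply] using smul_eq_zero_of_right _ h₁

theorem inv_sqrt_two_smul_projPerp_sub {e y₁ y₂ : (ι → ℝ) × H₀} (h₂ : ipTilde y₂ e = 0) :
    (√2)⁻¹ • projPerp e ((√2)⁻¹ • (y₁ + y₂) - (√2)⁻¹ • (y₁ - y₂)) = y₂ := by
  have hswap : (√2)⁻¹ • (y₁ + y₂) - (√2)⁻¹ • (y₁ - y₂) =
      (√2)⁻¹ • (y₂ + y₁) + (√2)⁻¹ • (y₂ - y₁) := by module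
  rw [hswap, inv_sqrt_two_smul_projPerp_add h₂]

end BoundarySpace

section BoundaryFunctionals

variable {R E : Type*} [CommRing R] [AddCommGroup E] [Module R E]
  {T : E →ₗ[R] ι → R} {ψ : ι → E} {Λ : E →ₗ[R] R}

theorem apply_linearCombination_eq_dotProduct (Λ : E →ₗ[R] R) (ψ : ι → E) (α : ι → R) :
    Λ (Fintype.linearCombination R ψ α) = (Λ ∘ ψ) ⬝ᵥ α := by
  simp only [Fintype.linearCombination_apply, map_sum, map_smul, smul_eq_mul, dotProduct,
    Function.comp_apply, mul_comm]

theorem apply_eq_dotProduct_of_ker_le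
    (hψ : Function.LeftInverse T (Fintype.linearCombination R ψ))
    (hΛ : LinearMap.ker T ≤ LinearMap.ker Λ) (φ : E) : Λ φ = (Λ ∘ ψ) ⬝ᵥ T φ := by
  have h : φ - Fintype.linearCombination R ψ (T φ) ∈ LinearMap.ker Λ :=
    hΛ (by rw [LinearMap.mem_ker, map_sub, hψ, sub_self])
  rw [LinearMap.mem_ker, map_sub, sub_eq_zero] at h
  rw [h, apply_linearCombination_eq_dotProduct]

theorem comp_eq_of_apply_eq_dotProduct
    (hψ : Function.LeftInverse T (Fintype.linearCombination R ψ)) {ν : ι → R}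
    (hΛ : ∀ φ, Λ φ = ν ⬝ᵥ T φ) : Λ ∘ ψ = ν := by
  refine dotProduct_eq _ _ fun α => ?_
  rw [← apply_linearCombination_eq_dotProduct, hΛ, hψ]

end BoundaryFunctionals

section BoundaryTrace

omit [CompactSpace X] [Fintype ι]

variable {𝒞 : Subalgebra ℝ C(X, ℝ)} {q : ι → X} {ψ : ι → 𝒞}

/-- The restriction of functions in `𝒞` to the boundary points `q i`. -/
def trace (𝒞 : Subalgebra ℝ C(X, ℝ)) (q : ι → X) : 𝒞 →ₗ[ℝ] ι → ℝ :=
  LinearMap.funLeft ℝ ℝ q ∘ₗ ContinuousMap.coeFnLinearMap ℝ ∘ₗ 𝒞.val.toLinearMap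

theorem trace_apply (f : 𝒞) (i : ι) : trace 𝒞 q f i = (f : C(X, ℝ)) (q i) := rfl

theorem trace_one : trace 𝒞 q 1 = 1 := rfl

theorem vanish_range_iff {f : 𝒞} : Vanish 𝒞 (Set.range q) f ↔ trace 𝒞 q f = 0 := by
  simp only [Vanish, Set.forall_mem_range, funext_iff, trace_apply, Pi.zero_apply]

theorem leftInverse_trace_linearCombination [Fintype ι] (hψ1 : ∀ i, (ψ i : C(X, ℝ)) (q i) = 1)
    (hψ0 : ∀ i k, i ≠ k → (ψ i : C(X, ℝ)) (q k) = 0) :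
    Function.LeftInverse (trace 𝒞 q) (Fintype.linearCombination ℝ ψ) := by
  intro α
  funext k
  rw [Fintype.linearCombination_apply, map_sum, Finset.sum_apply, Fintype.sum_eq_single k]
  · rw [map_smul, Pi.smul_apply, trace_apply, hψ1, smul_eq_mul, mul_one]
  · intro i hik
    rw [map_smul, Pi.smul_apply, trace_apply, hψ0 i k hik, smul_zero]

end BoundaryTrace

section RotatedDerivation

omit [CompactSpace X] [CompleteSpace H] [CompleteSpace H₀]

variable {𝒞 : Subalgebra ℝ C(X, ℝ)} {B : Set X} {par : 𝒞 →ₗ[ℝ] H} {j : 𝒞 →ₗ[ℝ] H₀}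
  {U : H₀ ≃ₗᵢ[ℝ] H} {q : ι → X} {ψ : ι → 𝒞}
  {f f' d d' w w' : H₀} {g g' u u' : 𝒞}

/-- Integration by parts for the rotated derivation: `j g ↦ U⁻¹(∂g)` is skew-symmetric on `j(𝒞)`.
The left side is `⟪j g, U⁻¹(∂φ)⟫` transported to `H` by the isometry `U`. -/
def SkewSymm (par : 𝒞 →ₗ[ℝ] H) (j : 𝒞 →ₗ[ℝ] H₀) (U : H₀ ≃ₗᵢ[ℝ] H) : Prop :=
  ∀ g φ : 𝒞, ⟪U (j g), par φ⟫ = -⟪U.symm (par g), j φ⟫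

/-- Solvability of the weak Neumann problem with flux `ν i` through the boundary point `q i` and
source `z`, whenever the total flux balances the total source. -/
def NeumannSolvable (par : 𝒞 →ₗ[ℝ] H) (j : 𝒞 →ₗ[ℝ] H₀) (q : ι → X) : Prop :=
  ∀ (z : H₀) (ν : ι → ℝ), ∑ i, ν i = ⟪z, j 1⟫ →
    ∃ u : 𝒞, ∀ φ : 𝒞, ⟪par u, par φ⟫ = ν ⬝ᵥ trace 𝒞 q φ - ⟪z, j φ⟫

/-- `ker ∂^⊥` as a subspace of `H₀`. -/
noncomputable def kerDperp (par : 𝒞 →ₗ[ℝ] H) (U : H₀ ≃ₗᵢ[ℝ] H) : Submodule ℝ H₀ :=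
  (LinearMap.range par)ᗮ.comap U.toLinearEquiv.toLinearMap

theorem mem_kerDperp_iff : w ∈ kerDperp par U ↔ KerDperp 𝒞 par U w := by
  simp only [kerDperp, KerDperp, Submodule.mem_comap, Submodule.mem_orthogonal',
    LinearMap.mem_range, forall_exists_index, forall_apply_eq_imp_iff]
  rfl

/-- The normal part `n_B(fb)` as a functional on `𝒞`, where `d = ∂_B^*(U f)`. -/
noncomputable def normalPart (par : 𝒞 →ₗ[ℝ] H) (j : 𝒞 →ₗ[ℝ] H₀) (U : H₀ ≃ₗᵢ[ℝ] H) (f d : H₀) :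
    𝒞 →ₗ[ℝ] ℝ :=
  innerₗ H (U f) ∘ₗ par + innerₗ H₀ (-d) ∘ₗ j

theorem normalPart_apply (φ : 𝒞) :
    normalPart par j U f d φ = ⟪U f, par φ⟫ + ⟪-d, j φ⟫ := rfl

/-- The vector `(𝟏_B, -j(1))`, whose orthogonal complement in `H̃±` is `H±`. -/
def boundaryConst (ι : Type*) (j : 𝒞 →ₗ[ℝ] H₀) : (ι → ℝ) × H₀ := (fun _ => 1, -(j 1))

/-- The half `(g|_B, w)` of the boundary data, shared by `G₋` and `G₊`. -/
def dirichletData (q : ι → X) (g : 𝒞) (w : H₀) : (ι → ℝ) × H₀ := (trace 𝒞 q g, w)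

/-- The half `(n_B(fb), z)` of the boundary data, which `G₋` adds and `G₊` subtracts. -/
noncomputable def neumannData (par : 𝒞 →ₗ[ℝ] H) (j : 𝒞 →ₗ[ℝ] H₀) (U : H₀ ≃ₗᵢ[ℝ] H) (ψ : ι → 𝒞)
    (f d : H₀) (g : 𝒞) : (ι → ℝ) × H₀ :=
  (normalPart par j U f d ∘ ψ, -d - U.symm (par g))

theorem Gminus_eq : Gminus 𝒞 par j U q ψ f d g w =
    (√2)⁻¹ • projPerp (boundaryConst ι j) (dirichletData q g w + neumannData par j U ψ f d g) :=
  rfl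

theorem Gplus_eq : Gplus 𝒞 par j U q ψ f d g w =
    (√2)⁻¹ • projPerp (boundaryConst ι j) (dirichletData q g w - neumannData par j U ψ f d g) :=
  rfl

theorem ipTilde_boundaryConst_eq_zero_iff {ν : ι → ℝ} {z : H₀} :
    ipTilde (ν, z) (boundaryConst ι j) = 0 ↔ ∑ i, ν i = ⟪z, j 1⟫ := by
  simp [ipTilde, boundaryConst, ← sub_eq_add_neg, sub_eq_zero]

theorem skewSymm_of_solenoidal {act : 𝒞 →ₗ[ℝ] H →ₗ[ℝ] H} {b : H}
    (hact_symm : ∀ (f : 𝒞) (v w : H), ⟪act f v, w⟫ = ⟪v, act f w⟫)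
    (hLeibniz : ∀ f g : 𝒞, par (f * g) = act f (par g) + act g (par f))
    (hsol : ∀ φ : 𝒞, ⟪b, par φ⟫ = 0) (hU : ∀ f : 𝒞, U (j f) = act f b) :
    SkewSymm par j U := by
  intro g φ
  have hφ : ⟪U.symm (par g), j φ⟫ = ⟪b, act φ (par g)⟫ := by
    rw [← U.inner_map_map, U.apply_symm_apply, hU, real_inner_comm, hact_symm]
  have hg : ⟪U (j g), par φ⟫ = ⟪b, act g (par φ)⟫ := by rw [hU, hact_symm]
  rw [hφ, hg, eq_neg_iff_add_eq_zero, ← inner_add_right, ← hLeibniz, hsol]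

theorem inner_symm_par_right (x : H₀) (φ : 𝒞) : ⟪x, U.symm (par φ)⟫ = ⟪U x, par φ⟫ := by
  rw [← U.inner_map_map, U.apply_symm_apply]

theorem inner_symm_par_of_mem_kerDperp (hw : w ∈ kerDperp par U) (φ : 𝒞) :
    ⟪w, U.symm (par φ)⟫ = 0 := by
  rw [inner_symm_par_right]
  exact mem_kerDperp_iff.1 hw φ

theorem j_one_mem_kerDperp (hskew : SkewSymm par j U) (hone : par 1 = 0) :
    j 1 ∈ kerDperp par U := by
  rw [mem_kerDperp_iff]
  intro φ
  rw [hskew, hone, map_zero, inner_zero_left, neg_zero]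

theorem par_eq_of_symm_par_sub_mem_kerDperp
    (h : U.symm (par g') - U.symm (par g) ∈ kerDperp par U) : par g' = par g := by
  have hself := inner_symm_par_of_mem_kerDperp h (g' - g)
  rwa [map_sub par, map_sub, inner_self_eq_zero, ← map_sub, map_eq_zero_iff _ U.symm.injective,
    sub_eq_zero] at hself

theorem AdjRel.unique (hdense : Dense (j '' {φ | Vanish 𝒞 B φ})) {v : H}
    (h : AdjRel 𝒞 B par j v d) (h' : AdjRel 𝒞 B par j v d') : d' = d := by
  refine hdense.eq_of_inner_left ℝ ?_
  rintro _ ⟨φ, hφ, rfl⟩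
  rw [← h φ hφ, ← h' φ hφ]

omit [Fintype ι] in
theorem AdjRel.ker_trace_le (h : AdjRel 𝒞 (Set.range q) par j (U f) d) :
    LinearMap.ker (trace 𝒞 q) ≤ LinearMap.ker (normalPart par j U f d) := by
  intro φ hφ
  rw [LinearMap.mem_ker, normalPart_apply, h φ (vanish_range_iff.2 hφ), inner_neg_left,
    add_neg_cancel]

/-- On `f = j g + U⁻¹(∂u) + w` the part `j g` only shifts `∂_B^⊥ f` by `U⁻¹(∂g)` and `w` is
invisible, so that the normal part is that of the gradient field `∂u`. -/
theorem normalPart_decomposition (hskew : SkewSymm par j U) (hw : w ∈ kerDperp par U) (φ : 𝒞) :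
    normalPart par j U (j g + U.symm (par u) + w) d φ =
      ⟪par u, par φ⟫ + ⟪-d - U.symm (par g), j φ⟫ := by
  rw [normalPart_apply, map_add, map_add, inner_add_left, inner_add_left,
    mem_kerDperp_iff.1 hw φ, hskew, U.apply_symm_apply, inner_sub_left]
  ring

namespace KeyRep

theorem mem_kerDperp (h : KeyRep 𝒞 B par j U f d g u w) : w ∈ kerDperp par U :=
  mem_kerDperp_iff.2 h.2.2.1

theorem eq_add (h : KeyRep 𝒞 B par j U f d g u w) : f = j g + U.symm (par u) + w :=
  h.2.2.2.1

theorem neg_sub_mem_kerDperp (h : KeyRep 𝒞 B par j U f d g u w) :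
    -d - U.symm (par g) ∈ kerDperp par U :=
  mem_kerDperp_iff.2 h.2.2.2.2

theorem normalPart_eq (hskew : SkewSymm par j U) (h : KeyRep 𝒞 B par j U f d g u w) (φ : 𝒞) :
    normalPart par j U f d φ = ⟪par u, par φ⟫ + ⟪-d - U.symm (par g), j φ⟫ := by
  rw [h.eq_add, normalPart_decomposition hskew h.mem_kerDperp]

theorem normalPart_dotProduct_trace
    (hψ : Function.LeftInverse (trace 𝒞 q) (Fintype.linearCombination ℝ ψ))
    (hskew : SkewSymm par j U) (h : KeyRep 𝒞 (Set.range q) par j U f d g u w) (φ : 𝒞) :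
    (normalPart par j U f d ∘ ψ) ⬝ᵥ trace 𝒞 q φ =
      ⟪par u, par φ⟫ + ⟪-d - U.symm (par g), j φ⟫ := by
  rw [← apply_eq_dotProduct_of_ker_le hψ h.1.ker_trace_le, h.normalPart_eq hskew]

theorem ipTilde_neumannData_boundaryConst
    (hψ : Function.LeftInverse (trace 𝒞 q) (Fintype.linearCombination ℝ ψ))
    (hskew : SkewSymm par j U) (hone : par 1 = 0)
    (h : KeyRep 𝒞 (Set.range q) par j U f d g u w) :
    ipTilde (neumannData par j U ψ f d g) (boundaryConst ι j) = 0 := by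
  have hflux := h.normalPart_dotProduct_trace hψ hskew 1
  rw [trace_one, dotProduct_one, hone, inner_zero_right, zero_add] at hflux
  exact ipTilde_boundaryConst_eq_zero_iff.2 hflux

omit [Fintype ι] in
theorem exists_dirichletData_eq_add_smul (hskew : SkewSymm par j U) (hone : par 1 = 0)
    (hconst : ∀ f : 𝒞, par f = 0 → ∃ c : ℝ, f = c • 1)
    (h : KeyRep 𝒞 B par j U f d g u w) (h' : KeyRep 𝒞 B par j U f d g' u' w') :
    par g' = par g ∧
      ∃ c : ℝ, dirichletData q g' w' = dirichletData q g w + c • boundaryConst ι j := by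
  have hg : par g' = par g := by
    refine par_eq_of_symm_par_sub_mem_kerDperp (U := U) ?_
    have := sub_mem h.neg_sub_mem_kerDperp h'.neg_sub_mem_kerDperp
    rwa [sub_sub_sub_cancel_left] at this
  obtain ⟨c, hc⟩ := hconst (g' - g) (by rw [map_sub, hg, sub_self])
  have hf : U.symm (par u') + w' + c • j 1 = U.symm (par u) + w := by
    have hj : j g' = j g + c • j 1 := by rw [← map_smul, ← hc, ← map_add, add_sub_cancel]
    have := h'.eq_add.symm.trans h.eq_add
    rw [hj] at this
    linear_combination (norm := module) this
  have hu : par u' = par u := by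
    refine par_eq_of_symm_par_sub_mem_kerDperp (U := U) ?_
    have hdiff : U.symm (par u') - U.symm (par u) = w - (w' + c • j 1) := by
      linear_combination (norm := module) hf
    rw [hdiff]
    exact sub_mem h.mem_kerDperp (add_mem h'.mem_kerDperp
      (Submodule.smul_mem _ c (j_one_mem_kerDperp hskew hone)))
  refine ⟨hg, c, Prod.ext ?_ ?_⟩
  · change trace 𝒞 q g' = trace 𝒞 q g + c • (1 : ι → ℝ)
    rw [← trace_one (𝒞 := 𝒞) (q := q), ← map_smul, ← hc, ← map_add, add_sub_cancel]
  · change w' = w + c • -(j 1)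
    rw [hu] at hf
    linear_combination (norm := module) hf

theorem Gminus_eq_and_Gplus_eq (hdense : Dense (j '' {φ | Vanish 𝒞 B φ}))
    (hskew : SkewSymm par j U) (hone : par 1 = 0)
    (hconst : ∀ f : 𝒞, par f = 0 → ∃ c : ℝ, f = c • 1)
    (h : KeyRep 𝒞 B par j U f d g u w) (h' : KeyRep 𝒞 B par j U f d' g' u' w') :
    Gminus 𝒞 par j U q ψ f d g w = Gminus 𝒞 par j U q ψ f d' g' w' ∧
      Gplus 𝒞 par j U q ψ f d g w = Gplus 𝒞 par j U q ψ f d' g' w' := by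
  obtain rfl := AdjRel.unique hdense h.1 h'.1
  obtain ⟨hg, c, hc⟩ := h.exists_dirichletData_eq_add_smul (q := q) hskew hone hconst h'
  have hneumann : neumannData par j U ψ f d' g' = neumannData par j U ψ f d' g := by
    rw [neumannData, hg, neumannData]
  rw [Gminus_eq, Gminus_eq, Gplus_eq, Gplus_eq, hc, hneumann, add_right_comm, add_sub_right_comm,
    projPerp_add_smul_self, projPerp_add_smul_self]
  exact ⟨rfl, rfl⟩

/-- All terms but the first are antisymmetric in the two key representations. -/
theorem ipTilde_dirichletData_neumannData
    (hψ : Function.LeftInverse (trace 𝒞 q) (Fintype.linearCombination ℝ ψ))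
    (hskew : SkewSymm par j U) (h : KeyRep 𝒞 B par j U f d g u w)
    (h' : KeyRep 𝒞 (Set.range q) par j U f' d' g' u' w') :
    ipTilde (dirichletData q g w) (neumannData par j U ψ f' d' g') =
      ⟪f, -d'⟫ - ⟪U (j g), par g'⟫ + (⟪par u', par g⟫ - ⟪par u, par g'⟫) := by
  set z' := -d' - U.symm (par g') with hz'
  have hd' : -d' = U.symm (par g') + z' := by rw [hz', add_sub_cancel]
  have hw : ⟪w, U.symm (par g')⟫ = 0 := inner_symm_par_of_mem_kerDperp h.mem_kerDperp g'
  have hz : ⟪U.symm (par u), z'⟫ = 0 := by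
    rw [real_inner_comm]
    exact inner_symm_par_of_mem_kerDperp h'.neg_sub_mem_kerDperp u
  have hip : ipTilde (dirichletData q g w) (neumannData par j U ψ f' d' g') =
      (normalPart par j U f' d' ∘ ψ) ⬝ᵥ trace 𝒞 q g + ⟪w, z'⟫ := by
    rw [dotProduct_comm]
    rfl
  rw [hip, h'.normalPart_dotProduct_trace hψ hskew, ← hz', hd', h.eq_add]
  simp only [inner_add_left, inner_add_right, hw, hz, inner_symm_par_right (j g),
    U.symm.inner_map_map, real_inner_comm z' (j g)]
  ring

theorem inner_add_inner_eq_ipTilde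
    (hψ : Function.LeftInverse (trace 𝒞 q) (Fintype.linearCombination ℝ ψ))
    (hskew : SkewSymm par j U) (hone : par 1 = 0)
    (h : KeyRep 𝒞 (Set.range q) par j U f d g u w)
    (h' : KeyRep 𝒞 (Set.range q) par j U f' d' g' u' w') :
    ⟪-d, f'⟫ + ⟪f, -d'⟫ =
      ipTilde (Gminus 𝒞 par j U q ψ f d g w) (Gminus 𝒞 par j U q ψ f' d' g' w') -
        ipTilde (Gplus 𝒞 par j U q ψ f d g w) (Gplus 𝒞 par j U q ψ f' d' g' w') := by
  have hrot : ⟪U (j g), par g'⟫ = -⟪U (j g'), par g⟫ := by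
    rw [hskew, real_inner_comm, inner_symm_par_right]
  simp only [Gminus_eq, Gplus_eq]
  rw [ipTilde_projPerp_add_sub_ipTilde_projPerp_sub _ _
      (h.ipTilde_neumannData_boundaryConst hψ hskew hone)
      (h'.ipTilde_neumannData_boundaryConst hψ hskew hone),
    ipTilde_comm (neumannData par j U ψ f d g), h.ipTilde_dirichletData_neumannData hψ hskew h',
    h'.ipTilde_dirichletData_neumannData hψ hskew h, hrot, real_inner_comm f' (-d)]
  ring

end KeyRep

theorem exists_keyRep_dirichletData_eq_neumannData_eq
    (hψ : Function.LeftInverse (trace 𝒞 q) (Fintype.linearCombination ℝ ψ))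
    (hskew : SkewSymm par j U) (hNeumann : NeumannSolvable par j q) {a c : (ι → ℝ) × H₀}
    (ha : a.2 ∈ kerDperp par U) (hc : c.2 ∈ kerDperp par U)
    (hce : ipTilde c (boundaryConst ι j) = 0) :
    ∃ (f d : H₀) (g u : 𝒞) (w : H₀), KeyRep 𝒞 (Set.range q) par j U f d g u w ∧
      dirichletData q g w = a ∧ neumannData par j U ψ f d g = c := by
  obtain ⟨α, w⟩ := a
  obtain ⟨ν, z⟩ := c
  obtain ⟨u, hu⟩ := hNeumann z ν (ipTilde_boundaryConst_eq_zero_iff.1 hce)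
  set g := Fintype.linearCombination ℝ ψ α
  set f := j g + U.symm (par u) + w
  set d := -U.symm (par g) - z
  have hz : -d - U.symm (par g) = z := by simp only [d]; abel
  have hnormal : ∀ φ, normalPart par j U f d φ = ν ⬝ᵥ trace 𝒞 q φ := fun φ => by
    rw [normalPart_decomposition hskew ha, hz, hu, sub_add_cancel]
  have hflux : ∀ φ, Vanish 𝒞 (Set.range q) φ → ν ⬝ᵥ trace 𝒞 q φ = 0 := fun φ hφ => by
    rw [vanish_range_iff.1 hφ, dotProduct_zero]
  have hkey : KeyRep 𝒞 (Set.range q) par j U f d g u w := by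
    refine ⟨fun φ hφ => ?_, ⟨-z, fun φ hφ => ?_⟩, mem_kerDperp_iff.1 ha, rfl, ?_⟩
    · have := (hnormal φ).trans (hflux φ hφ)
      rwa [normalPart_apply, inner_neg_left, add_neg_eq_zero] at this
    · rw [hu, hflux φ hφ, inner_neg_left, zero_sub]
    · rw [hz]
      exact mem_kerDperp_iff.1 hc
  exact ⟨f, d, g, u, w, hkey, Prod.ext (hψ α) rfl,
    Prod.ext (comp_eq_of_apply_eq_dotProduct hψ hnormal) hz⟩

theorem exists_keyRep_Gminus_eq_Gplus_eq
    (hψ : Function.LeftInverse (trace 𝒞 q) (Fintype.linearCombination ℝ ψ))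
    (hskew : SkewSymm par j U) (hNeumann : NeumannSolvable par j q) {y₁ y₂ : (ι → ℝ) × H₀}
    (hy₁ : y₁.2 ∈ kerDperp par U) (hp₁ : ipTilde y₁ (boundaryConst ι j) = 0)
    (hy₂ : y₂.2 ∈ kerDperp par U) (hp₂ : ipTilde y₂ (boundaryConst ι j) = 0) :
    ∃ (f d : H₀) (g u : 𝒞) (w : H₀), KeyRep 𝒞 (Set.range q) par j U f d g u w ∧
      Gminus 𝒞 par j U q ψ f d g w = y₁ ∧ Gplus 𝒞 par j U q ψ f d g w = y₂ := by
  have hperp : ipTilde ((√2)⁻¹ • (y₁ - y₂)) (boundaryConst ι j) = 0 := by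
    rw [ipTilde_eq_ipForm] at hp₁ hp₂ ⊢
    rw [map_smul, map_sub, LinearMap.smul_apply, LinearMap.sub_apply, hp₁, hp₂, sub_zero,
      smul_zero]
  obtain ⟨f, d, g, u, w, hkey, hD, hN⟩ := exists_keyRep_dirichletData_eq_neumannData_eq hψ hskew
    hNeumann (a := (√2)⁻¹ • (y₁ + y₂)) (Submodule.smul_mem _ _ (add_mem hy₁ hy₂))
    (Submodule.smul_mem _ _ (sub_mem hy₁ hy₂)) hperp
  refine ⟨f, d, g, u, w, hkey, ?_, ?_⟩
  · rw [Gminus_eq, hD, hN, inv_sqrt_two_smul_projPerp_add hp₁]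
  · rw [Gplus_eq, hD, hN, inv_sqrt_two_smul_projPerp_sub hp₂]

theorem stmt_11_general (hskew : SkewSymm par j U)
    (hjdense : Dense (j '' {f : 𝒞 | Vanish 𝒞 (Set.range q) f}))
    (hconst : ∀ f : 𝒞, par f = 0 ↔ ∃ cst : ℝ, ∀ x : X, (f : C(X, ℝ)) x = cst)
    (hNeumann : NeumannSolvable par j q)
    (hψ1 : ∀ i, (ψ i : C(X, ℝ)) (q i) = 1)
    (hψ0 : ∀ i i', i ≠ i' → (ψ i : C(X, ℝ)) (q i') = 0) :
    (∀ (f d d' : H₀) (g u g' u' : 𝒞) (w w' : H₀),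
      KeyRep 𝒞 (Set.range q) par j U f d g u w → KeyRep 𝒞 (Set.range q) par j U f d' g' u' w' →
      Gminus 𝒞 par j U q ψ f d g w = Gminus 𝒞 par j U q ψ f d' g' w' ∧
      Gplus 𝒞 par j U q ψ f d g w = Gplus 𝒞 par j U q ψ f d' g' w') ∧
    (∀ (f₁ f₂ d₁ d₂ : H₀) (g₁ u₁ g₂ u₂ : 𝒞) (w₁ w₂ : H₀),
      KeyRep 𝒞 (Set.range q) par j U f₁ d₁ g₁ u₁ w₁ →
      KeyRep 𝒞 (Set.range q) par j U f₂ d₂ g₂ u₂ w₂ →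
      ⟪-d₁, f₂⟫ + ⟪f₁, -d₂⟫ =
        ipTilde (Gminus 𝒞 par j U q ψ f₁ d₁ g₁ w₁) (Gminus 𝒞 par j U q ψ f₂ d₂ g₂ w₂) -
        ipTilde (Gplus 𝒞 par j U q ψ f₁ d₁ g₁ w₁) (Gplus 𝒞 par j U q ψ f₂ d₂ g₂ w₂)) ∧
    (∀ y₁ y₂ : (ι → ℝ) × H₀,
      KerDperp 𝒞 par U y₁.2 → ipTilde y₁ (boundaryConst ι j) = 0 →
      KerDperp 𝒞 par U y₂.2 → ipTilde y₂ (boundaryConst ι j) = 0 →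
      ∃ (f d : H₀) (g u : 𝒞) (w : H₀), KeyRep 𝒞 (Set.range q) par j U f d g u w ∧
        Gminus 𝒞 par j U q ψ f d g w = y₁ ∧ Gplus 𝒞 par j U q ψ f d g w = y₂) := by
  have hψ := leftInverse_trace_linearCombination hψ1 hψ0
  have hone : par 1 = 0 := (hconst 1).2 ⟨1, fun _ => rfl⟩
  have hker : ∀ f : 𝒞, par f = 0 → ∃ c : ℝ, f = c • 1 := fun f hf => by
    obtain ⟨c, hc⟩ := (hconst f).1 hf
    exact ⟨c, Subtype.ext (ContinuousMap.ext fun x => (hc x).trans (mul_one c).symm)⟩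
  exact ⟨fun _ _ _ _ _ _ _ _ _ h h' => h.Gminus_eq_and_Gplus_eq hjdense hskew hone hker h',
    fun _ _ _ _ _ _ _ _ _ _ h₁ h₂ => h₁.inner_add_inner_eq_ipTilde hψ hskew hone h₂,
    fun _ _ hy₁ hp₁ hy₂ hp₂ => exists_keyRep_Gminus_eq_Gplus_eq hψ hskew hNeumann
      (mem_kerDperp_iff.2 hy₁) hp₁ (mem_kerDperp_iff.2 hy₂) hp₂⟩

end RotatedDerivation

section FiniteBoundary

omit [CompleteSpace H] [CompleteSpace H₀]

variable {𝒞 : Subalgebra ℝ C(X, ℝ)} {par : 𝒞 →ₗ[ℝ] H} {j : 𝒞 →ₗ[ℝ] H₀} {q : ι → X}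

theorem abs_dotProduct_trace_le (ν : ι → ℝ) (f : 𝒞) :
    |ν ⬝ᵥ trace 𝒞 q f| ≤ (∑ i, |ν i|) * ‖(f : C(X, ℝ))‖ := by
  rw [Finset.sum_mul]
  refine (Finset.abs_sum_le_sum_abs _ _).trans (Finset.sum_le_sum fun i _ => ?_)
  rw [abs_mul]
  exact mul_le_mul_of_nonneg_left ((f : C(X, ℝ)).norm_coe_le_norm (q i)) (abs_nonneg _)

theorem neumannSolvable_of_bounded
    (hNeumann : ∀ (z : H₀) (F : 𝒞 →ₗ[ℝ] ℝ),
      (∀ φ : 𝒞, Vanish 𝒞 (Set.range q) φ → F φ = 0) →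
      (∃ C : ℝ, ∀ f : 𝒞, |F f| ≤ C * (‖par f‖ + ‖(f : C(X, ℝ))‖)) →
      F 1 = ⟪z, j 1⟫ →
      ∃ u : 𝒞, ∀ φ : 𝒞, ⟪par u, par φ⟫ = F φ - ⟪z, j φ⟫) :
    NeumannSolvable par j q := by
  intro z ν hν
  refine hNeumann z (dotProductBilin ℝ ℝ ν ∘ₗ trace 𝒞 q) (fun φ hφ => ?_)
    ⟨∑ i, |ν i|, fun f => (abs_dotProduct_trace_le ν f).trans ?_⟩ ?_
  · rw [LinearMap.comp_apply, vanish_range_iff.1 hφ, map_zero]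
  · exact mul_le_mul_of_nonneg_left (le_add_of_nonneg_left (norm_nonneg _))
      (Finset.sum_nonneg fun i _ => abs_nonneg (ν i))
  · exact (dotProduct_one ν).trans hν

end FiniteBoundary

/-- **Boundary quadruple for solenoidal fields** (Theorem `simplequadruple`):
`(H±, H±, G₋, G₊)` is a boundary quadruple for `j f ↦ −U⁻¹(∂f)` on `j(𝒞_B)`:
(a) `G₋` and `G₊` do not depend on the chosen key representation, (b) they satisfy the
abstract integration by parts identity, and (c) `f ↦ (G₋f, G₊f)` is onto `H± × H±`. -/
theorem stmt_11
    (𝒞 : Subalgebra ℝ C(X, ℝ))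
    (act : 𝒞 →ₗ[ℝ] H →ₗ[ℝ] H)
    (hact_one : ∀ v : H, act 1 v = v)
    (hact_symm : ∀ (f : 𝒞) (v w : H), ⟪act f v, w⟫ = ⟪v, act f w⟫)
    (hact_bound : ∀ (f : 𝒞) (v : H), ‖act f v‖ ≤ ‖(f : C(X, ℝ))‖ * ‖v‖)
    (par : 𝒞 →ₗ[ℝ] H)
    (hLeibniz : ∀ f g : 𝒞, par (f * g) = act f (par g) + act g (par f))
    (B : Set X) (hB : IsClosed B)
    (b : H) (hbne : b ≠ 0)
    (hsol : ∀ φ : 𝒞, ⟪b, par φ⟫ = 0)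
    (j : 𝒞 →ₗ[ℝ] H₀) (hjinj : Function.Injective j)
    (hjdense : Dense (⇑j '' {f : 𝒞 | Vanish 𝒞 B f}))
    (U : H₀ ≃ₗᵢ[ℝ] H) (hU : ∀ f : 𝒞, U (j f) = act f b)
    -- resistance-space laws
    (hconst : ∀ f : 𝒞, par f = 0 ↔ ∃ cst : ℝ, ∀ x : X, (f : C(X, ℝ)) x = cst)
    (hclosedrange : IsClosed ((LinearMap.range par : Submodule ℝ H) : Set H))
    (hNeumann : ∀ (z : H₀) (F : 𝒞 →ₗ[ℝ] ℝ),
      (∀ φ : 𝒞, Vanish 𝒞 B φ → F φ = 0) →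
      (∃ C : ℝ, ∀ f : 𝒞, |F f| ≤ C * (‖par f‖ + ‖(f : C(X, ℝ))‖)) →
      F 1 = ⟪z, j 1⟫ →
      ∃ u : 𝒞, ∀ φ : 𝒞, ⟪par u, par φ⟫ = F φ - ⟪z, j φ⟫)
    -- finite boundary data
    (q : ι → X) (hqinj : Function.Injective q) (hBq : B = Set.range q)
    (ψ : ι → 𝒞)
    (hψ1 : ∀ i, (ψ i : C(X, ℝ)) (q i) = 1)
    (hψ0 : ∀ i i', i ≠ i' → (ψ i : C(X, ℝ)) (q i') = 0)
    (hψharm : ∀ i, ∀ φ : 𝒞, Vanish 𝒞 B φ → ⟪par (ψ i), par φ⟫ = 0)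
    -- since `b` is solenoidal, `j(1) ∈ ker ∂^⊥`
    (hjone : KerDperp 𝒞 par U (j 1))
    -- every element of `D(∂_B^⊥)` admits a key representation
    (hrep : ∀ f d : H₀, AdjRel 𝒞 B par j (U f) d →
      ∃ (g u : 𝒞) (w : H₀), KeyRep 𝒞 B par j U f d g u w) :
    -- (a) independence of the chosen key representation
    (∀ (f d d' : H₀) (g u g' u' : 𝒞) (w w' : H₀),
      KeyRep 𝒞 B par j U f d g u w → KeyRep 𝒞 B par j U f d' g' u' w' →
      Gminus 𝒞 par j U q ψ f d g w = Gminus 𝒞 par j U q ψ f d' g' w' ∧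
      Gplus 𝒞 par j U q ψ f d g w = Gplus 𝒞 par j U q ψ f d' g' w') ∧
    -- (b) the abstract integration by parts identity
    (∀ (f₁ f₂ d₁ d₂ : H₀) (g₁ u₁ g₂ u₂ : 𝒞) (w₁ w₂ : H₀),
      KeyRep 𝒞 B par j U f₁ d₁ g₁ u₁ w₁ → KeyRep 𝒞 B par j U f₂ d₂ g₂ u₂ w₂ →
      ⟪-d₁, f₂⟫ + ⟪f₁, -d₂⟫ =
        ipTilde (Gminus 𝒞 par j U q ψ f₁ d₁ g₁ w₁) (Gminus 𝒞 par j U q ψ f₂ d₂ g₂ w₂) -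
        ipTilde (Gplus 𝒞 par j U q ψ f₁ d₁ g₁ w₁) (Gplus 𝒞 par j U q ψ f₂ d₂ g₂ w₂)) ∧
    -- (c) surjectivity onto `H± × H±`
    (∀ y₁ y₂ : (ι → ℝ) × H₀,
      KerDperp 𝒞 par U y₁.2 → ipTilde y₁ (fun _ => (1 : ℝ), -(j 1)) = 0 →
      KerDperp 𝒞 par U y₂.2 → ipTilde y₂ (fun _ => (1 : ℝ), -(j 1)) = 0 →
      ∃ (f d : H₀) (g u : 𝒞) (w : H₀), KeyRep 𝒞 B par j U f d g u w ∧
        Gminus 𝒞 par j U q ψ f d g w = y₁ ∧ Gplus 𝒞 par j U q ψ f d g w = y₂) := by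
  subst hBq
  exact stmt_11_general (skewSymm_of_solenoidal hact_symm hLeibniz hsol hU) hjdense hconst
    (neumannSolvable_of_bounded hNeumann) hψ1 hψ0

end Stmt11
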